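/- Let μ be a singular cardinal with cf(μ) = κ. If 𝔞_κ ≤ μ, then every cardinal in the interval [𝔞_κ, μ] belongs to MAD(μ). -/

import Mathlib

/-!
Write `κ = cf μ` and let `𝔞 ≤ c ≤ μ`, where `𝔞` is the least size of a nontrivial `κ`-mad family.

A set of size `μ` is split into `c` pieces `X α` of size `μ`, indexed by a well order `Λ` of type
`c.ord`. The pieces form an almost disjoint family of size `c`, which has to be enlarged to a
maximal one without changing its size. The sets that the pieces miss are found at the cuts
`δ ∈ WithTop Λ` of cofinality `κ`: for such a `δ` a strictly increasing cofinal `κ`-sequence (a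
*ladder*) groups the part of the set below `δ` into `κ` columns of size `μ`.

A `κ`-mad family of size `𝔞` is rearranged so that `κ` of its members are the columns of a
partition of its underlying set (`exists_columns`). Replacing the points of that set by blocks
whose sizes are cofinal in `μ` (`exists_block_map`) matches its columns with the columns below `δ`;
the preimages of the remaining members are at most `𝔞` pairwise almost disjoint sets of size `μ`,
each almost disjoint from every column, and every set of size `μ` below `δ` meets a column or one of
them in size `μ` (`exists_block_family`, `exists_limit_family`). The pieces `X α` together with
these sets, for all `δ` of cofinality `κ`, form a family of size at most `c + c * 𝔞 = c`.

For maximality, let `C` have size `μ` and let `δ` be the least cut with `C` of size `μ` below `δ`.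
If `C` has size `μ` on some closed initial segment bounded by `α < δ`, then minimality of `δ` makes
`C ∩ X α` of size `μ`. Otherwise `δ` has cofinality `κ` (`exists_ladder`), and the family attached
to `δ` contains a set meeting `C` in size `μ`.
-/

universe u
open Cardinal

/-- A family `𝒜` of subsets of `α` is `μ`-almost disjoint: its union has size `μ`,
each member has size `μ`, and distinct members intersect in a set of size `< μ`. -/
def IsADFamily (μ : Cardinal.{u}) {α : Type u} (𝒜 : Set (Set α)) : Prop :=
  #(⋃₀ 𝒜) = μ ∧ (∀ A ∈ 𝒜, #A = μ) ∧
    ∀ A ∈ 𝒜, ∀ B ∈ 𝒜, A ≠ B → #(↥(A ∩ B)) < μ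

/-- `𝒜` is maximal `μ`-almost disjoint: it is `μ`-ad and no new set `C ⊆ ⋃₀ 𝒜`
can be added keeping the family `μ`-almost disjoint. -/
def IsMadFamily (μ : Cardinal.{u}) {α : Type u} (𝒜 : Set (Set α)) : Prop :=
  IsADFamily μ 𝒜 ∧ ¬∃ C, C ⊆ ⋃₀ 𝒜 ∧ C ∉ 𝒜 ∧ IsADFamily μ (insert C 𝒜)

/-- `MADSet μ` is the set of cardinalities of nontrivial `μ`-mad families,
i.e. `μ`-mad families with at least `cf μ` members. -/
def MADSet (μ : Cardinal.{u}) : Set Cardinal.{u} :=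
  {c | ∃ 𝒜 : Set (Set μ.out), IsMadFamily μ 𝒜 ∧ μ.ord.cof ≤ #𝒜 ∧ #𝒜 = c}

/-! ### Cardinal arithmetic -/

theorem mk_lt_of_subset_union {μ : Cardinal.{u}} (hμ : ℵ₀ ≤ μ) {α : Type u} {S T U : Set α}
    (h : S ⊆ T ∪ U) (hT : #T < μ) (hU : #U < μ) : #S < μ :=
  ((mk_le_mk_of_subset h).trans (mk_union_le T U)).trans_lt (add_lt_of_lt hμ hT hU)

theorem mk_biUnion_lt {μ : Cardinal.{u}} (hμ : ℵ₀ ≤ μ) {ι α : Type u} (s : Set ι)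
    (f : ι → Set α) (hs : #s < μ.ord.cof) (hf : ∀ i ∈ s, #(f i) < μ) :
    #(⋃ i ∈ s, f i) < μ := by
  refine (mk_biUnion_le f s).trans_lt (mul_lt_of_lt hμ (hs.trans_le (Ordinal.cof_ord_le μ)) ?_)
  exact Cardinal.iSup_lt_of_lt_cof_ord hs fun i => hf i i.2

theorem mk_biUnion_le_of_le {ι α : Type u} (s : Set ι) (f : ι → Set α) (x : Cardinal.{u})
    (hf : ∀ i ∈ s, #(f i) ≤ x) : #(⋃ i ∈ s, f i) ≤ #s * x :=
  (mk_biUnion_le f s).trans (mul_le_mul_right (ciSup_le' fun i : s => hf i i.2) _)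

theorem mk_Iio_toType_lt {κ : Cardinal.{u}} (y : κ.ord.ToType) : #(Set.Iio y) < κ := by
  simpa using mk_Iio_lt y (by simp)

theorem mk_Iic_toType_lt {κ : Cardinal.{u}} (hκ : ℵ₀ ≤ κ) (y : κ.ord.ToType) :
    #(Set.Iic y) < κ := by
  simpa using mk_Iic_lt y (by simp) (by simpa using hκ)

theorem exists_le_of_le_mk {κ : Cardinal.{u}} (J : Set κ.ord.ToType) (hJ : κ ≤ #J)
    (l : κ.ord.ToType) : ∃ k ∈ J, l ≤ k := by
  by_contra! h
  exact absurd (hJ.trans (mk_le_mk_of_subset (t := Set.Iio l) h)) (mk_Iio_toType_lt l).not_ge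

theorem cof_isRegular {μ : Cardinal.{u}} (hμ : ℵ₀ ≤ μ) : μ.ord.cof.IsRegular :=
  isRegular_cof (isSuccLimit_ord hμ)

/-- A singular `μ` is approached by cardinals `ν k < μ`, indexed by `cf μ`, that are unbounded
in `μ` along every index set of full size. Unboundedness is phrased as: a cardinal above all the
`ν k` is at least `μ`. -/
theorem exists_block_sizes {μ : Cardinal.{u}} (hμ : ℵ₀ ≤ μ) (hsing : μ.ord.cof < μ) :
    ∃ ν : μ.ord.cof.ord.ToType → Cardinal.{u}, (∀ k, ν k < μ) ∧
      ∀ J : Set μ.ord.cof.ord.ToType, μ.ord.cof ≤ #J → ∀ x, (∀ k ∈ J, ν k ≤ x) → μ ≤ x := by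
  have hκ := cof_isRegular hμ
  obtain ⟨s, hs, hsc⟩ := Order.exists_cof_eq μ.ord.ToType
  rw [Ordinal.cof_toType] at hsc
  obtain ⟨f⟩ : Nonempty (μ.ord.cof.ord.ToType ≃ s) := Cardinal.eq.1 (by simp [hsc])
  have hIic : ∀ y : μ.ord.ToType, #(Set.Iic y) < μ := mk_Iic_toType_lt hμ
  have hIic' : ∀ k : μ.ord.cof.ord.ToType, #(Set.Iic k) < μ.ord.cof := mk_Iic_toType_lt hκ.1
  -- `ν k` is the size of the initial segment spanned by the first `k` points of a cofinal sequence;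
  -- this makes `ν` monotone, so it is unbounded along every cofinal index set.
  refine ⟨fun k => #(⋃ l ∈ Set.Iic k, Set.Iic (f l : μ.ord.ToType)), fun k =>
    mk_biUnion_lt hμ _ _ (hIic' k) fun _ _ => hIic _, fun J hJ x hx => ?_⟩
  by_contra! hlt
  have h1 : #(⋃ l ∈ (Set.univ : Set μ.ord.cof.ord.ToType), Set.Iic (f l : μ.ord.ToType))
      ≤ #(Set.univ : Set μ.ord.cof.ord.ToType) * x := by
    refine mk_biUnion_le_of_le _ _ _ fun l _ => ?_
    obtain ⟨k, hk, hlk⟩ := exists_le_of_le_mk J hJ l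
    exact (mk_le_mk_of_subset (Set.subset_biUnion_of_mem
      (u := fun l => Set.Iic (f l : μ.ord.ToType)) (show l ∈ Set.Iic k from hlk))).trans (hx k hk)
  have h2 : (⋃ l ∈ (Set.univ : Set μ.ord.cof.ord.ToType), Set.Iic (f l : μ.ord.ToType))
      = Set.univ := by
    refine Set.eq_univ_of_forall fun y => ?_
    obtain ⟨z, hz, hyz⟩ := hs y
    simp only [Set.mem_iUnion]
    exact ⟨f.symm ⟨z, hz⟩, trivial, by simpa using hyz⟩
  rw [h2, mk_univ, mk_univ, mk_ord_toType, mk_ord_toType] at h1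
  exact (mul_lt_of_lt hμ hsing hlt).not_ge h1

/-- Maximality in the form used below: a set of full size inside the union meets some member
in full size. -/
theorem IsMadFamily.exists_mem {κ : Cardinal.{u}} {α : Type u} {ℬ : Set (Set α)}
    (h : IsMadFamily κ ℬ) {D : Set α} (hD : D ⊆ ⋃₀ ℬ) (hDc : #D = κ) :
    ∃ B ∈ ℬ, #(↥(B ∩ D)) = κ := by
  by_contra! hne
  have hlt : ∀ B ∈ ℬ, #(↥(B ∩ D)) < κ := fun B hB =>
    lt_of_le_of_ne ((mk_le_mk_of_subset Set.inter_subset_right).trans hDc.le) (hne B hB)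
  refine h.2 ⟨D, hD, fun hmem => hne D hmem (by simpa using hDc), ?_, ?_, ?_⟩
  · rw [Set.sUnion_insert, Set.union_eq_right.2 hD]
    exact h.1.1
  · rintro A (rfl | hA)
    · exact hDc
    · exact h.1.2.1 A hA
  · rintro A (rfl | hA) B (rfl | hB) hAB
    · exact absurd rfl hAB
    · rw [Set.inter_comm]; exact hlt B hB
    · exact hlt A hA
    · exact h.1.2.2 A hA B hB hAB

/-- Maximality follows once every set of full size meets some member in full size. -/
theorem isMadFamily_of_forall {μ : Cardinal.{u}} {α : Type u} {𝒜 : Set (Set α)}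
    (h : IsADFamily μ 𝒜) (hmax : ∀ C : Set α, #C = μ → ∃ A ∈ 𝒜, #(↥(A ∩ C)) = μ) :
    IsMadFamily μ 𝒜 := by
  refine ⟨h, ?_⟩
  rintro ⟨C, -, hC, -, hcard, had⟩
  obtain ⟨A, hA, hAC⟩ := hmax C (hcard C (Set.mem_insert _ _))
  exact (had A (Set.mem_insert_of_mem _ hA) C (Set.mem_insert _ _)
    (by rintro rfl; exact hC hA)).ne hAC

/-! ### A mad family on a regular cardinal with a partition into columns -/

/-- A nontrivial `κ`-mad family, rearranged: on a set `Q` of size `κ`, the fibres of `col`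
replace `κ` of its members and partition `Q`, and `ℬ` holds the remaining members, so that every
set of size `κ` meets a column or a member of `ℬ` in size `κ`. The injection `g` labels the points
of `Q` by `κ`. -/
theorem exists_columns {κ : Cardinal.{u}} (hκ : κ.IsRegular) {a : Cardinal.{u}}
    (ha : a ∈ MADSet κ) :
    ∃ (Q : Type u) (g : Q → κ.ord.ToType) (col : Q → κ.ord.ToType) (ℬ : Set (Set Q)),
      Function.Injective g ∧ #Q = κ ∧ #ℬ ≤ a ∧ (∀ j, #(col ⁻¹' {j}) = κ) ∧
      (∀ B ∈ ℬ, #B = κ ∧ ∀ j, #(↥(B ∩ col ⁻¹' {j})) < κ) ∧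
      (∀ A ∈ ℬ, ∀ B ∈ ℬ, A ≠ B → #(↥(A ∩ B)) < κ) ∧
      ∀ D : Set Q, #D = κ →
        (∃ j, #(↥(D ∩ col ⁻¹' {j})) = κ) ∨ ∃ B ∈ ℬ, #(↥(B ∩ D)) = κ := by
  classical
  obtain ⟨ℬ₀, hmad, hcof, hcard⟩ := ha
  rw [hκ.cof_ord] at hcof
  have hQ : #(⋃₀ ℬ₀) = κ := hmad.1.1
  obtain ⟨g⟩ : Nonempty (↥(⋃₀ ℬ₀) ≃ κ.ord.ToType) := Cardinal.eq.1 (by simp [hQ])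
  obtain ⟨b⟩ : Nonempty (κ.ord.ToType ↪ ℬ₀) := Cardinal.le_def _ _ |>.1 (by simpa using hcof)
  -- restriction of a member of `ℬ₀` to the subtype `⋃₀ ℬ₀`
  let R : Set κ.out → Set ↥(⋃₀ ℬ₀) := fun B => Subtype.val ⁻¹' B
  have hRc : ∀ S ⊆ ⋃₀ ℬ₀, #(R S) = #S := fun S hS =>
    mk_preimage_of_injective_of_subset_range _ _ Subtype.val_injective
      (by rw [Subtype.range_coe]; exact hS)
  have hRsub : ∀ B ∈ ℬ₀, B ⊆ ⋃₀ ℬ₀ := fun B hB => Set.subset_sUnion_of_mem hB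
  have hRinter : ∀ A ∈ ℬ₀, ∀ B ∈ ℬ₀, A ≠ B → #(↥(R A ∩ R B)) < κ := fun A hA B hB hAB => by
    have := hRc (A ∩ B) (Set.inter_subset_left.trans (hRsub A hA))
    exact this.trans_lt (hmad.1.2.2 A hA B hB hAB)
  -- A point goes to the first chosen member `b j` that contains it. A point in no `b j` goes to
  -- column `g q`, which adds at most one point to each column.
  have hcolex : ∀ q : ↥(⋃₀ ℬ₀), ∃ j : κ.ord.ToType,
      (∀ l, q ∈ R (b l) → q ∈ R (b j) ∧ j ≤ l) ∧ ((∀ l, q ∉ R (b l)) → g q = j) := by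
    intro q
    by_cases h : ∃ l, q ∈ R (b l)
    · refine ⟨wellFounded_lt.min {l | q ∈ R (b l)} h, fun l hl => ⟨?_, ?_⟩, fun h' => ?_⟩
      · exact wellFounded_lt.min_mem {l | q ∈ R (b l)} h
      · exact not_lt.1 (wellFounded_lt.not_lt_min {l | q ∈ R (b l)} hl)
      · exact absurd h (not_exists.2 h')
    · exact ⟨g q, fun l hl => absurd ⟨l, hl⟩ h, fun _ => rfl⟩
  choose col hcol1 hcol2 using hcolex
  have hfib : ∀ j, col ⁻¹' {j} ⊆ R (b j) ∪ {g.symm j} := by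
    rintro j q rfl
    by_cases h : ∃ l, q ∈ R (b l)
    · obtain ⟨l, hl⟩ := h
      exact Or.inl (hcol1 q l hl).1
    · exact Or.inr (by simp [← hcol2 q (not_exists.1 h)])
  -- `b j` loses only its intersections with the fewer than `κ` earlier members.
  have hdiff : ∀ j, #(↥(R (b j) \ col ⁻¹' {j})) < κ := fun j => by
    refine (mk_le_mk_of_subset (t := ⋃ l ∈ Set.Iio j, R (b l) ∩ R (b j)) ?_).trans_lt
      (mk_biUnion_lt hκ.1 _ _ (by rw [hκ.cof_ord]; exact mk_Iio_toType_lt j) ?_)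
    · rintro q ⟨hq, hne⟩
      obtain ⟨h1, h2⟩ := hcol1 q j hq
      simp only [Set.mem_iUnion]
      exact ⟨col q, lt_of_le_of_ne h2 hne, h1, hq⟩
    · intro l hl
      refine hRinter _ (b l).2 _ (b j).2 fun h => ?_
      exact (Set.mem_Iio.1 hl).ne (b.injective (Subtype.ext h))
  have hone : ∀ q : ↥(⋃₀ ℬ₀), #({q} : Set ↥(⋃₀ ℬ₀)) < κ := fun q => by
    simpa using one_lt_aleph0.trans_le hκ.1
  refine ⟨↥(⋃₀ ℬ₀), g, col, R '' (ℬ₀ \ Set.range fun j => (b j : Set κ.out)), g.injective, hQ,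
    ?_, ?_, ?_, ?_, ?_⟩
  · exact mk_image_le.trans ((mk_le_mk_of_subset Set.sdiff_subset).trans hcard.le)
  · intro j
    refine le_antisymm ((mk_set_le _).trans hQ.le) (not_lt.1 fun hlt => ?_)
    refine (mk_lt_of_subset_union hκ.1 (S := R (b j)) (T := col ⁻¹' {j})
      (U := R (b j) \ col ⁻¹' {j}) (by simp) hlt (hdiff j)).ne ?_
    rw [hRc _ (hRsub _ (b j).2), hmad.1.2.1 _ (b j).2]
  · rintro _ ⟨B, ⟨hB, hBb⟩, rfl⟩
    refine ⟨by rw [hRc _ (hRsub _ hB), hmad.1.2.1 _ hB], fun j => ?_⟩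
    refine mk_lt_of_subset_union hκ.1 (T := R B ∩ R (b j)) (U := {g.symm j}) ?_
      (hRinter _ hB _ (b j).2 fun h => hBb ⟨j, h.symm⟩) (hone _)
    rintro q ⟨hq, hqj⟩
    rcases hfib j hqj with h | h
    · exact Or.inl ⟨hq, h⟩
    · exact Or.inr h
  · rintro _ ⟨A, ⟨hA, -⟩, rfl⟩ _ ⟨B, ⟨hB, -⟩, rfl⟩ hAB
    exact hRinter A hA B hB fun h => hAB (by rw [h])
  · intro D hD
    obtain ⟨B, hB, hBD⟩ := hmad.exists_mem (D := Subtype.val '' D)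
      (by rintro _ ⟨q, -, rfl⟩; exact q.2) (by rw [mk_image_eq Subtype.val_injective, hD])
    have hBD' : #(↥(R B ∩ D)) = κ := by
      refine Eq.trans ?_ hBD
      rw [← mk_image_eq Subtype.val_injective (s := R B ∩ D), Set.image_preimage_inter]
    by_cases hBb : B ∈ Set.range fun j => (b j : Set κ.out)
    · obtain ⟨j, rfl⟩ := hBb
      refine Or.inl ⟨j, le_antisymm ((mk_set_le _).trans hQ.le) (not_lt.1 fun hlt => ?_)⟩
      refine (mk_lt_of_subset_union hκ.1 (T := D ∩ col ⁻¹' {j})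
        (U := R (b j) \ col ⁻¹' {j}) ?_ hlt (hdiff j)).ne hBD'
      rintro q ⟨hq, hqD⟩
      by_cases h : q ∈ col ⁻¹' {j}
      · exact Or.inl ⟨hqD, h⟩
      · exact Or.inr ⟨hq, h⟩
    · exact Or.inr ⟨_, ⟨B, ⟨hB, hBb⟩, rfl⟩, hBD'⟩

/-! ### Blowing up points to blocks -/

/-- If the weights `w q` over each column of `Q` are unbounded in `μ`, then `Y`, whose
`r`-classes have size `μ`, can be cut into blocks of size `w q` in such a way that the block of
`q` lies in the class `col q`. -/
theorem exists_block_map {μ : Cardinal.{u}} (hμ : ℵ₀ ≤ μ) {Ω Q K : Type u} [Nonempty Q]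
    (hK : #Q < μ) (Y : Set Ω) (r : Ω → K) (col : Q → K) (w : Q → Cardinal.{u})
    (hr : ∀ j, #(↥(Y ∩ r ⁻¹' {j})) = μ) (hw : ∀ q, w q < μ)
    (hcol : ∀ j x, (∀ q, col q = j → w q ≤ x) → μ ≤ x) :
    ∃ π : Ω → Q, (∀ x ∈ Y, col (π x) = r x) ∧ ∀ q, #(↥(Y ∩ π ⁻¹' {q})) = w q := by
  classical
  have hsum : ∀ j, #(↥(Y ∩ r ⁻¹' {j})) = #(Σ q : {q // col q = j}, (w q).out) := fun j => by
    rw [hr, mk_sigma]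
    simp only [mk_out]
    refine le_antisymm (hcol j _ fun q hq => ?_) ?_
    · exact le_sum (fun q : {q // col q = j} => w q) ⟨q, hq⟩
    · refine (sum_le_sum (fun q : {q // col q = j} => w q) (fun _ => μ) fun q => (hw q).le).trans ?_
      rw [sum_const']
      exact (mul_le_mul_left ((mk_subtype_le _).trans hK.le) μ).trans (mul_eq_self hμ).le
  have e := fun j => Classical.choice (Cardinal.eq.1 (hsum j))
  let φ : ∀ q, (w q).out → Ω := fun q t => ((e (col q)).symm ⟨⟨q, rfl⟩, t⟩).1
  have hφ : ∀ j q (hq : col q = j) t, φ q t = ((e j).symm ⟨⟨q, hq⟩, t⟩).1 := by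
    rintro _ q rfl t; rfl
  have hφY : ∀ q t, φ q t ∈ Y := fun q t => ((e (col q)).symm ⟨⟨q, rfl⟩, t⟩).2.1
  have hφr : ∀ q t, r (φ q t) = col q := fun q t => ((e (col q)).symm ⟨⟨q, rfl⟩, t⟩).2.2
  have hφs : ∀ x, ∃ q, x ∈ Y → ∃ t, φ q t = x := by
    intro x
    by_cases hx : x ∈ Y
    · refine ⟨(e (r x) ⟨x, hx, rfl⟩).1.1, fun _ => ⟨(e (r x) ⟨x, hx, rfl⟩).2, ?_⟩⟩
      rw [hφ (r x) _ (e (r x) ⟨x, hx, rfl⟩).1.2]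
      exact congrArg Subtype.val ((e (r x)).symm_apply_apply ⟨x, hx, rfl⟩)
    · exact ⟨Classical.arbitrary Q, fun h => absurd h hx⟩
  have hφi : ∀ q q' t t', φ q t = φ q' t' → q = q' := by
    intro q q' t t' h
    have hc : col q' = col q := by rw [← hφr q t, ← hφr q' t', h]
    rw [hφ (col q) q rfl, hφ (col q) q' hc] at h
    have := (e (col q)).symm.injective (Subtype.ext h)
    exact congrArg (fun s => s.1.1) this
  choose π hπ using hφs
  have hπφ : ∀ q t, π (φ q t) = q := fun q t => by
    obtain ⟨t', ht'⟩ := hπ _ (hφY q t)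
    exact hφi _ _ _ _ ht'
  refine ⟨π, fun x hx => ?_, fun q => ?_⟩
  · obtain ⟨t, ht⟩ := hπ x hx
    rw [← hφr (π x) t, ht]
  · have : Y ∩ π ⁻¹' {q} = Set.range (φ q) := by
      ext x
      constructor
      · rintro ⟨hx, rfl⟩
        exact hπ x hx
      · rintro ⟨t, rfl⟩
        exact ⟨hφY q t, hπφ q t⟩
    rw [this, mk_range_eq, mk_out]
    intro t t' h
    have := (e (col q)).symm.injective (Subtype.ext h)
    simpa using this

/-- The transfer from `κ = cf μ` to `μ`: if `Y` is divided into `κ` classes of size `μ`, then a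
nontrivial `κ`-mad family of size `a` gives at most `a` almost disjoint subsets of `Y`, almost
disjoint from all classes, that together with the classes are maximal on `Y`. -/
theorem exists_block_family {μ : Cardinal.{u}} (hμ : ℵ₀ ≤ μ) (hsing : μ.ord.cof < μ)
    {a : Cardinal.{u}} (ha : a ∈ MADSet μ.ord.cof) {Ω : Type u} (Y : Set Ω)
    (r : Ω → μ.ord.cof.ord.ToType) (hr : ∀ j, #(↥(Y ∩ r ⁻¹' {j})) = μ) :
    ∃ 𝒜 : Set (Set Ω), #𝒜 ≤ a ∧
      (∀ A ∈ 𝒜, A ⊆ Y ∧ #A = μ ∧ ∀ j, #(↥(A ∩ r ⁻¹' {j})) < μ) ∧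
      (∀ A ∈ 𝒜, ∀ B ∈ 𝒜, A ≠ B → #(↥(A ∩ B)) < μ) ∧
      ∀ C ⊆ Y, #C = μ → (∃ j, #(↥(C ∩ r ⁻¹' {j})) = μ) ∨ ∃ A ∈ 𝒜, #(↥(A ∩ C)) = μ := by
  have hκ := cof_isRegular hμ
  obtain ⟨ν, hνlt, hν⟩ := exists_block_sizes hμ hsing
  obtain ⟨Q, g, col, ℬ, hg, hQ, hℬa, hcolc, hℬ, hℬad, hℬmax⟩ := exists_columns hκ ha
  have hνg : ∀ B : Set Q, #B = μ.ord.cof → ∀ x, (∀ q ∈ B, ν (g q) ≤ x) → μ ≤ x := by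
    intro B hB x hx
    refine hν (g '' B) (by rw [mk_image_eq hg, hB]) x ?_
    rintro _ ⟨q, hq, rfl⟩
    exact hx q hq
  have : Nonempty Q := mk_ne_zero_iff.1 (by rw [hQ]; exact hκ.ne_zero)
  obtain ⟨π, hπr, hπc⟩ := exists_block_map hμ (hQ.trans_lt hsing) Y r col (fun q => ν (g q)) hr
    (fun q => hνlt _) fun j x hx => hνg _ (hcolc j) x fun q hq => hx q hq
  have hYμ : #Y ≤ μ := by
    refine (mk_le_mk_of_subset (t := ⋃ j ∈ Set.univ, Y ∩ r ⁻¹' {j}) fun x hx => ?_).trans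
      ((mk_biUnion_le_of_le Set.univ (fun j => Y ∩ r ⁻¹' {j}) μ fun j _ => (hr j).le).trans ?_)
    · simp only [Set.mem_iUnion]
      exact ⟨r x, trivial, hx, rfl⟩
    · rw [mk_univ, mk_ord_toType]
      exact (mul_le_mul_left hsing.le μ).trans (mul_eq_self hμ).le
  have hsmall : ∀ B : Set Q, #B < μ.ord.cof → #(↥(Y ∩ π ⁻¹' B)) < μ := fun B hB => by
    refine (mk_le_mk_of_subset (t := ⋃ q ∈ B, Y ∩ π ⁻¹' {q}) fun x hx => ?_).trans_lt
      (mk_biUnion_lt hμ _ _ hB fun q _ => (hπc q).trans_lt (hνlt _))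
    simp only [Set.mem_iUnion]
    exact ⟨π x, hx.2, hx.1, rfl⟩
  have hlarge : ∀ B : Set Q, #B = μ.ord.cof → #(↥(Y ∩ π ⁻¹' B)) = μ := fun B hB => by
    refine le_antisymm ((mk_le_mk_of_subset Set.inter_subset_left).trans hYμ)
      (hνg B hB _ fun q hq => (hπc q).symm.le.trans (mk_le_mk_of_subset ?_))
    rintro x ⟨hx, rfl⟩
    exact ⟨hx, hq⟩
  refine ⟨(fun B => Y ∩ π ⁻¹' B) '' ℬ, mk_image_le.trans hℬa, ?_, ?_, ?_⟩
  · rintro _ ⟨B, hB, rfl⟩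
    refine ⟨Set.inter_subset_left, hlarge B (hℬ B hB).1, fun j => ?_⟩
    refine (mk_le_mk_of_subset ?_).trans_lt (hsmall _ ((hℬ B hB).2 j))
    rintro x ⟨⟨hx, hxB⟩, hxj⟩
    exact ⟨hx, hxB, (hπr x hx).trans hxj⟩
  · rintro _ ⟨A, hA, rfl⟩ _ ⟨B, hB, rfl⟩ hAB
    refine (mk_le_mk_of_subset ?_).trans_lt (hsmall _ (hℬad A hA B hB fun h => hAB (by rw [h])))
    rintro x ⟨⟨hx, hxA⟩, -, hxB⟩
    exact ⟨hx, hxA, hxB⟩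
  · intro C hCY hC
    -- `C` is not covered by `κ` sets of size below `ν k`, so it meets some block `d k` in size at
    -- least `ν k`. The set of these `κ` many blocks is what the `κ`-mad family catches.
    have hd : ∀ k, ∃ q, ν k ≤ #(↥(C ∩ π ⁻¹' {q})) := by
      intro k
      by_contra! h
      have h1 : #C ≤ #(Set.univ : Set Q) * ν k := by
        refine (mk_le_mk_of_subset (t := ⋃ q ∈ Set.univ, C ∩ π ⁻¹' {q}) fun x hx => ?_).trans
          (mk_biUnion_le_of_le _ _ _ fun q _ => (h q).le)
        simp only [Set.mem_iUnion]
        exact ⟨π x, trivial, hx, rfl⟩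
      rw [mk_univ, hQ, hC] at h1
      exact (mul_lt_of_lt hμ hsing (hνlt k)).not_ge h1
    choose d hd using hd
    have hbig : ∀ D : Set Q, μ.ord.cof ≤ #(d ⁻¹' D) → #(↥(C ∩ π ⁻¹' D)) = μ := by
      intro D hD
      refine le_antisymm ((mk_le_mk_of_subset Set.inter_subset_left).trans hC.le)
        (hν _ hD _ fun k hk => (hd k).trans (mk_le_mk_of_subset ?_))
      rintro x ⟨hx, hxk⟩
      exact ⟨hx, by rw [Set.mem_preimage, Set.mem_singleton_iff.1 hxk]; exact hk⟩
    have hDc : #(Set.range d) = μ.ord.cof := by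
      refine le_antisymm (mk_range_le.trans (mk_ord_toType _).le) (not_lt.1 fun hlt => ?_)
      refine (hsmall _ hlt).not_ge ((hbig (Set.range d) ?_).symm.le.trans
        (mk_le_mk_of_subset (Set.inter_subset_inter_left _ hCY)))
      rw [Set.preimage_range, mk_univ, mk_ord_toType]
    have hbig' : ∀ D : Set Q, #(↥(D ∩ Set.range d)) = μ.ord.cof →
        #(↥(C ∩ π ⁻¹' D)) = μ := fun D hD => by
      refine hbig D ?_
      refine hD.symm.le.trans ?_
      rw [← Set.preimage_inter_range]
      exact mk_preimage_of_subset_range _ _ Set.inter_subset_right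
    rcases hℬmax _ hDc with ⟨j, hj⟩ | ⟨B, hB, hBD⟩
    · left
      refine ⟨j, ?_⟩
      refine Eq.trans ?_ (hbig' (col ⁻¹' {j}) (by rwa [Set.inter_comm]))
      congr 2
      ext x
      simp only [Set.mem_inter_iff, Set.mem_preimage, and_congr_right_iff]
      intro hx
      rw [hπr x (hCY hx)]
    · right
      refine ⟨_, ⟨B, hB, rfl⟩, ?_⟩
      refine Eq.trans ?_ (hbig' B hBD)
      congr 2
      ext x
      simp only [Set.mem_inter_iff, Set.mem_preimage]
      exact ⟨fun h => ⟨h.2, h.1.2⟩, fun h => ⟨⟨hCY h.1, h.2⟩, h.1⟩⟩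

/-! ### Cuts of cofinality `cf μ` -/

/-- `e` is a strictly increasing sequence of length `κ`, cofinal below the cut `δ`. Cuts are
elements of `WithTop Λ`, where `⊤` is the cut above all of `Λ`. -/
def IsLadder (κ : Cardinal.{u}) {Λ : Type u} [LinearOrder Λ] (δ : WithTop Λ)
    (e : κ.ord.ToType → Λ) : Prop :=
  StrictMono e ∧ (∀ j, (e j : WithTop Λ) < δ) ∧ ∀ α : Λ, (α : WithTop Λ) < δ → ∃ j, α ≤ e j

/-- The sets attached to a cut `δ` with a ladder: almost disjoint sets below `δ`, each of size
less than `μ` on proper initial segments, that catch every set of size `μ` below `δ` which is of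
size less than `μ` on all proper initial segments. -/
theorem exists_limit_family {μ : Cardinal.{u}} (hμ : ℵ₀ ≤ μ) (hsing : μ.ord.cof < μ)
    {a : Cardinal.{u}} (ha : a ∈ MADSet μ.ord.cof) {Ω Λ : Type u} [LinearOrder Λ]
    (hΩ : #Ω = μ) (p : Ω → Λ) (hp : ∀ α, #(p ⁻¹' {α}) = μ) (δ : WithTop Λ)
    (hδ : ∃ e : μ.ord.cof.ord.ToType → Λ, IsLadder _ δ e) :
    ∃ 𝒜 : Set (Set Ω), #𝒜 ≤ a ∧
      (∀ A ∈ 𝒜, A ⊆ {x | (p x : WithTop Λ) < δ} ∧ #A = μ ∧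
        ∀ α : Λ, (α : WithTop Λ) < δ → #(↥(A ∩ {x | p x ≤ α})) < μ) ∧
      (∀ A ∈ 𝒜, ∀ B ∈ 𝒜, A ≠ B → #(↥(A ∩ B)) < μ) ∧
      ∀ C ⊆ {x | (p x : WithTop Λ) < δ}, #C = μ →
        (∃ α : Λ, (α : WithTop Λ) < δ ∧ #(↥(C ∩ {x | p x ≤ α})) = μ) ∨
          ∃ A ∈ 𝒜, #(↥(A ∩ C)) = μ := by
  have hκ := cof_isRegular hμ
  obtain ⟨e, he, heδ, hecof⟩ := hδ
  have : Nonempty μ.ord.cof.ord.ToType :=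
    mk_ne_zero_iff.1 (by rw [mk_ord_toType]; exact hκ.ne_zero)
  -- The class of a point is the index of the first ladder step at or above it.
  have hrex : ∀ x, ∃ j, (p x : WithTop Λ) < δ → p x ≤ e j ∧ ∀ l, p x ≤ e l → j ≤ l := by
    intro x
    by_cases hx : (p x : WithTop Λ) < δ
    · have hne : {j | p x ≤ e j}.Nonempty := hecof _ hx
      exact ⟨wellFounded_lt.min _ hne, fun _ => ⟨wellFounded_lt.min_mem _ hne,
        fun l hl => not_lt.1 (wellFounded_lt.not_lt_min {j | p x ≤ e j} hl)⟩⟩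
    · exact ⟨Classical.arbitrary _, fun h => absurd h hx⟩
  choose r hr using hrex
  obtain ⟨𝒜, h1, h2, h3, h4⟩ := exists_block_family hμ hsing ha
    {x | (p x : WithTop Λ) < δ} r fun j => by
      refine le_antisymm ((mk_set_le _).trans hΩ.le) ((hp (e j)).symm.le.trans
        (mk_le_mk_of_subset ?_))
      intro x hx
      have hx : p x = e j := hx
      have hxδ : (p x : WithTop Λ) < δ := by rw [hx]; exact heδ j
      obtain ⟨h1, h2⟩ := hr x hxδ
      exact ⟨hxδ, le_antisymm (h2 j hx.le) (he.le_iff_le.1 (hx ▸ h1))⟩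
  refine ⟨𝒜, h1, fun A hA => ⟨(h2 A hA).1, (h2 A hA).2.1, fun α hα => ?_⟩, h3, fun C hCY hC => ?_⟩
  · obtain ⟨j, hj⟩ := hecof α hα
    refine (mk_le_mk_of_subset (t := ⋃ l ∈ Set.Iic j, A ∩ r ⁻¹' {l}) ?_).trans_lt
      (mk_biUnion_lt hμ _ _ (mk_Iic_toType_lt hκ.1 j) fun l _ => (h2 A hA).2.2 l)
    rintro x ⟨hxA, hxα⟩
    simp only [Set.mem_iUnion]
    exact ⟨r x, (hr x ((h2 A hA).1 hxA)).2 j (le_trans hxα hj), hxA, rfl⟩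
  · rcases h4 C hCY hC with ⟨j, hj⟩ | h
    · refine Or.inl ⟨e j, heδ j, le_antisymm ((mk_set_le _).trans hΩ.le)
        (hj.symm.le.trans (mk_le_mk_of_subset ?_))⟩
      rintro x ⟨hx, rfl⟩
      exact ⟨hx, (hr x (hCY hx)).1⟩
    · exact Or.inr h

/-- A cut below which `C` has size `μ`, while `C` is smaller on every proper initial segment,
has cofinality `cf μ`. -/
theorem exists_ladder {μ : Cardinal.{u}} (hμ : ℵ₀ ≤ μ) (hsing : μ.ord.cof < μ)
    {Ω Λ : Type u} [LinearOrder Λ] (p : Ω → Λ) (δ : WithTop Λ) (C : Set Ω)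
    (hC : #(↥(C ∩ {x | (p x : WithTop Λ) < δ})) = μ)
    (hsmall : ∀ α : Λ, (α : WithTop Λ) < δ → #(↥(C ∩ {x | p x ≤ α})) < μ) :
    ∃ e : μ.ord.cof.ord.ToType → Λ, IsLadder _ δ e := by
  have hκ := cof_isRegular hμ
  obtain ⟨ν, hνlt, hν⟩ := exists_block_sizes hμ hsing
  have hcover : ∀ T : Set Λ, (∀ β : Λ, (β : WithTop Λ) < δ → ∃ t ∈ T, β ≤ t) →
      C ∩ {x | (p x : WithTop Λ) < δ} ⊆ ⋃ t ∈ T, C ∩ {x | p x ≤ t} := by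
    rintro T hT x ⟨hxC, hx⟩
    obtain ⟨t, ht, hxt⟩ := hT _ hx
    simp only [Set.mem_iUnion]
    exact ⟨t, ht, hxC, hxt⟩
  -- The sizes of the initial parts of `C` are unbounded in `μ`. If they stayed below `ν k`, take
  -- a subset `S` of `C` of size greater than `ν k`: bounded `S` is too large for an initial part,
  -- and cofinal `S` makes `C` a union of `#S` sets of size at most `ν k`.
  have hh : ∀ k, ∃ α : Λ, (α : WithTop Λ) < δ ∧ ν k ≤ #(↥(C ∩ {x | p x ≤ α})) := by
    intro k
    by_contra! hlt
    have hs : Order.succ (max (ν k) ℵ₀) < μ := by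
      have : IsSingular μ := ⟨hμ, hsing.ne⟩
      exact this.isSuccLimit.succ_lt (max_lt (hνlt k) (hκ.1.trans_lt hsing))
    obtain ⟨S, hSC, hS⟩ := le_mk_iff_exists_subset.1 (hs.le.trans hC.symm.le)
    by_cases hb : ∀ β : Λ, (β : WithTop Λ) < δ → ∃ t ∈ p '' S, β ≤ t
    · have h1 := (mk_le_mk_of_subset (hcover _ hb)).trans
        (mk_biUnion_le_of_le _ _ (ν k) ?_)
      · rw [hC] at h1
        exact (mul_lt_of_lt hμ (mk_image_le.trans_lt (hS.trans_lt hs)) (hνlt k)).not_ge h1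
      · rintro _ ⟨x, hx, rfl⟩
        exact (hlt _ (hSC hx).2).le
    · push Not at hb
      obtain ⟨β, hβ, hSβ⟩ := hb
      have h1 : #S ≤ #(↥(C ∩ {x | p x ≤ β})) :=
        mk_le_mk_of_subset fun x hx => ⟨(hSC hx).1, (hSβ _ ⟨x, hx, rfl⟩).le⟩
      rw [hS] at h1
      exact ((h1.trans_lt (hlt β hβ)).trans_le (le_max_left _ _)).not_ge (Order.le_succ _)
  choose h hhδ hhν using hh
  -- Fewer than `cf μ` points below `δ` have a strict upper bound below `δ`, for otherwise the
  -- corresponding initial parts would cover `C`. The bound is also placed above `h j`.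
  have hub : ∀ (T : Set Λ) (j : μ.ord.cof.ord.ToType), ∃ β : Λ,
      (∀ t ∈ T, (t : WithTop Λ) < δ) → #T < μ.ord.cof →
        (β : WithTop Λ) < δ ∧ (∀ t ∈ T, t < β) ∧ h j ≤ β := by
    intro T j
    by_cases hT : (∀ t ∈ T, (t : WithTop Λ) < δ) ∧ #T < μ.ord.cof
    · have : ∃ β : Λ, (β : WithTop Λ) < δ ∧ ∀ t ∈ T, t < β := by
        by_contra! hno
        exact ((mk_le_mk_of_subset (hcover T hno)).trans_lt
          (mk_biUnion_lt hμ _ _ hT.2 fun t ht => hsmall t (hT.1 t ht))).ne hC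
      obtain ⟨β, hβ, hTβ⟩ := this
      refine ⟨max β (h j), fun _ _ => ⟨?_, fun t ht => lt_max_of_lt_left (hTβ t ht),
        le_max_right _ _⟩⟩
      rcases max_choice β (h j) with h' | h' <;> rw [h']
      exacts [hβ, hhδ j]
    · exact ⟨h j, fun h1 h2 => absurd ⟨h1, h2⟩ hT⟩
  choose ub hub using hub
  let e : μ.ord.cof.ord.ToType → Λ :=
    wellFounded_lt.fix fun j ih => ub {x | ∃ l, ∃ hl : l < j, ih l hl = x} j
  have he : ∀ j, e j = ub (e '' Set.Iio j) j := fun j => by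
    have h1 := wellFounded_lt.fix_eq
      (fun (j : μ.ord.cof.ord.ToType) (ih : ∀ l, l < j → Λ) =>
        ub {x | ∃ l, ∃ hl : l < j, ih l hl = x} j) j
    refine h1.trans (congrArg (fun T => ub T j) ?_)
    ext x
    constructor
    · rintro ⟨l, hl, rfl⟩
      exact ⟨l, hl, rfl⟩
    · rintro ⟨l, hl, rfl⟩
      exact ⟨l, hl, rfl⟩
  have hprop : ∀ j, (e j : WithTop Λ) < δ ∧ (∀ l < j, e l < e j) ∧ h j ≤ e j := by
    intro j
    induction j using WellFoundedLT.induction with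
    | ind j ih =>
      obtain ⟨h1, h2, h3⟩ := hub (e '' Set.Iio j) j
        (by rintro _ ⟨l, hl, rfl⟩; exact (ih l hl).1)
        (mk_image_le.trans_lt (mk_Iio_toType_lt j))
      rw [← he j] at h1 h2 h3
      exact ⟨h1, fun l hl => h2 _ ⟨l, hl, rfl⟩, h3⟩
  refine ⟨e, fun l j hlj => (hprop j).2.1 l hlj, fun j => (hprop j).1, fun α hα => ?_⟩
  by_contra! hlt
  refine (hsmall α hα).not_ge (hν Set.univ (by simp) _ fun k _ => (hhν k).trans
    (mk_le_mk_of_subset ?_))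
  rintro x ⟨hxC, hx⟩
  exact ⟨hxC, le_trans hx ((hprop k).2.2.trans (hlt k).le)⟩

/-! ### The mad families of prescribed size -/

/-- A partition of a regular `κ` into `κ` pieces extends to a mad family. This ensures that
`sInf (MADSet κ)` is attained rather than the value of `sInf` at the empty set. -/
theorem MADSet_nonempty {κ : Cardinal.{u}} (hκ : κ.IsRegular) : (MADSet κ).Nonempty := by
  obtain ⟨e⟩ : Nonempty (κ.out ≃ κ.out × κ.out) :=
    Cardinal.eq.1 (by simp [mul_eq_self hκ.1])
  let X : κ.out → Set κ.out := fun i => {x | (e x).1 = i}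
  have hX : ∀ i, #(X i) = κ := fun i => by
    have : X i = Set.range fun t => e.symm (i, t) := by
      ext x
      constructor
      · rintro rfl
        exact ⟨(e x).2, by simp⟩
      · rintro ⟨t, rfl⟩
        simp [X]
    rw [this, mk_range_eq _ fun t t' h => by simpa using h, mk_out]
  have hXi : Function.Injective X := fun i j hij => by
    have : Nonempty (X i) := mk_ne_zero_iff.1 (by rw [hX]; exact hκ.ne_zero)
    obtain ⟨x, hx⟩ := this
    have hx' : x ∈ X j := hij ▸ hx
    exact Eq.trans (Eq.symm hx) hx'
  let S : Set (Set (Set κ.out)) := {𝒜 | (∀ A ∈ 𝒜, #A = κ) ∧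
    ∀ A ∈ 𝒜, ∀ B ∈ 𝒜, A ≠ B → #(↥(A ∩ B)) < κ}
  have h0 : Set.range X ∈ S := by
    refine ⟨by rintro _ ⟨i, rfl⟩; exact hX i, ?_⟩
    rintro _ ⟨i, rfl⟩ _ ⟨j, rfl⟩ hij
    have : X i ∩ X j = ∅ := by
      ext x
      simp only [Set.mem_inter_iff, Set.mem_empty_iff_false, iff_false]
      rintro ⟨h1, h2⟩
      exact hij (congrArg X (Eq.trans (Eq.symm h1) h2))
    rw [this, mk_eq_zero]
    exact hκ.pos
  obtain ⟨ℳ, hℳ0, hℳ⟩ := zorn_subset_nonempty S (by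
    intro c hcS hc _
    refine ⟨⋃₀ c, ⟨?_, ?_⟩, fun s hs => Set.subset_sUnion_of_mem hs⟩
    · rintro A ⟨s, hs, hA⟩
      exact (hcS hs).1 A hA
    · rintro A ⟨s, hs, hA⟩ B ⟨t, ht, hB⟩ hAB
      rcases hc.total hs ht with hst | hst
      · exact (hcS ht).2 A (hst hA) B hB hAB
      · exact (hcS hs).2 A hA B (hst hB) hAB) _ h0
  have hU : ⋃₀ ℳ = Set.univ :=
    Set.eq_univ_of_forall fun x => ⟨X (e x).1, hℳ0 ⟨_, rfl⟩, rfl⟩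
  refine ⟨#ℳ, ℳ, isMadFamily_of_forall ⟨by rw [hU, mk_univ, mk_out], hℳ.1⟩ ?_, ?_, rfl⟩
  · intro C hC
    by_contra! hne
    have hlt : ∀ A ∈ ℳ, #(↥(A ∩ C)) < κ := fun A hA =>
      lt_of_le_of_ne ((mk_le_mk_of_subset Set.inter_subset_right).trans hC.le) (hne A hA)
    have hins : insert C ℳ ∈ S := by
      refine ⟨?_, ?_⟩
      · rintro A (rfl | hA)
        · exact hC
        · exact hℳ.1.1 A hA
      · rintro A (rfl | hA) B (rfl | hB) hAB
        · exact absurd rfl hAB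
        · rw [Set.inter_comm]; exact hlt B hB
        · exact hlt A hA
        · exact hℳ.1.2 A hA B hB hAB
    have hmem : C ∈ ℳ := hℳ.2 hins (Set.subset_insert _ _) (Set.mem_insert _ _)
    exact hne C hmem (by simpa using hC)
  · rw [hκ.cof_ord]
    calc κ = #(Set.range X) := by rw [mk_range_eq _ hXi, mk_out]
      _ ≤ #ℳ := mk_le_mk_of_subset hℳ0

/-- If μ is singular with cf(μ) = κ and 𝔞_κ ≤ μ, then [𝔞_κ, μ] ⊆ MAD(μ). -/
theorem stmt13 (μ : Cardinal.{u}) (hμ : ℵ₀ ≤ μ) (hsing : μ.ord.cof < μ)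
    (ha : sInf (MADSet μ.ord.cof) ≤ μ) :
    ∀ c : Cardinal.{u}, sInf (MADSet μ.ord.cof) ≤ c → c ≤ μ → c ∈ MADSet μ := by
  intro c hac hcμ
  have hκ := cof_isRegular hμ
  have hmem : sInf (MADSet μ.ord.cof) ∈ MADSet μ.ord.cof := csInf_mem (MADSet_nonempty hκ)
  generalize sInf (MADSet μ.ord.cof) = a at hmem hac ha
  have hκa : μ.ord.cof ≤ a := by
    obtain ⟨ℬ, -, h1, h2⟩ := hmem
    rw [hκ.cof_ord, h2] at h1
    exact h1
  have hκc : μ.ord.cof ≤ c := hκa.trans hac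
  have hc : ℵ₀ ≤ c := hκ.1.trans hκc
  have hΩ : #μ.out = μ := mk_out μ
  obtain ⟨f⟩ : Nonempty (μ.out ≃ c.ord.ToType × μ.out) := Cardinal.eq.1 (by
    simp [mul_eq_right hμ hcμ (aleph0_pos.trans_le hc).ne'])
  let p : μ.out → c.ord.ToType := fun x => (f x).1
  have hp : ∀ α, #(p ⁻¹' {α}) = μ := fun α => by
    have : p ⁻¹' {α} = Set.range fun t => f.symm (α, t) := by
      ext x
      constructor
      · rintro rfl
        exact ⟨(f x).2, by simp [p]⟩
      · rintro ⟨t, rfl⟩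
        simp [p]
    rw [this, mk_range_eq _ fun t t' h => by simpa using h, mk_out]
  -- the families attached to the cuts of cofinality `cf μ`
  have hfam := fun δ : {δ : WithTop c.ord.ToType //
      ∃ e : μ.ord.cof.ord.ToType → c.ord.ToType, IsLadder _ δ e} =>
    exists_limit_family hμ hsing hmem hΩ p hp δ.1 δ.2
  choose F hFa hF hFad hFmax using hfam
  have hFX : ∀ δ, ∀ A ∈ F δ, ∀ α, #(↥(A ∩ p ⁻¹' {α})) < μ := by
    intro δ A hA α
    by_cases hα : (α : WithTop c.ord.ToType) < δ.1
    · refine (mk_le_mk_of_subset ?_).trans_lt ((hF δ A hA).2.2 α hα)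
      rintro x ⟨hx, rfl⟩
      exact ⟨hx, le_refl (p x)⟩
    · have : A ∩ p ⁻¹' {α} = ∅ := by
        ext x
        simp only [Set.mem_inter_iff, Set.mem_empty_iff_false, iff_false]
        rintro ⟨hx, rfl⟩
        exact hα ((hF δ A hA).1 hx)
      rw [this, mk_eq_zero]
      exact aleph0_pos.trans_le hμ
  have hFF : ∀ δ δ', δ.1 < δ'.1 → ∀ A ∈ F δ, ∀ B ∈ F δ', #(↥(A ∩ B)) < μ := by
    intro δ δ' hlt A hA B hB
    obtain ⟨α, hα⟩ := WithTop.ne_top_iff_exists.1 hlt.ne_top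
    refine (mk_le_mk_of_subset ?_).trans_lt ((hF δ' B hB).2.2 α (by rw [hα]; exact hlt))
    rintro x ⟨hxA, hxB⟩
    refine ⟨hxB, ?_⟩
    have h1 : (p x : WithTop c.ord.ToType) < δ.1 := (hF δ A hA).1 hxA
    rw [← hα] at h1
    exact (WithTop.coe_lt_coe.1 h1).le
  let X : c.ord.ToType → Set μ.out := fun α => p ⁻¹' {α}
  have hXi : Function.Injective X := fun i j hij => by
    have : Nonempty (X i) := mk_ne_zero_iff.1 (by rw [hp]; exact (aleph0_pos.trans_le hμ).ne')
    obtain ⟨x, hx⟩ := this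
    have hx' : x ∈ X j := hij ▸ hx
    exact Eq.trans (Eq.symm hx) hx'
  refine ⟨Set.range X ∪ ⋃ δ, F δ, isMadFamily_of_forall ⟨?_, ?_, ?_⟩ ?_, ?_⟩
  · have : ⋃₀ (Set.range X ∪ ⋃ δ, F δ) = Set.univ :=
      Set.eq_univ_of_forall fun x => ⟨X (p x), Or.inl ⟨_, rfl⟩, rfl⟩
    rw [this, mk_univ, hΩ]
  · rintro A (⟨α, rfl⟩ | hA)
    · exact hp α
    · obtain ⟨δ, hA⟩ := Set.mem_iUnion.1 hA
      exact (hF δ A hA).2.1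
  · rintro A (⟨α, rfl⟩ | hA) B (⟨β, rfl⟩ | hB) hAB
    · have : X α ∩ X β = ∅ := by
        ext x
        simp only [Set.mem_inter_iff, Set.mem_empty_iff_false, iff_false]
        rintro ⟨h1, h2⟩
        exact hAB (congrArg X (Eq.trans (Eq.symm h1) h2))
      rw [this, mk_eq_zero]
      exact aleph0_pos.trans_le hμ
    · obtain ⟨δ, hB⟩ := Set.mem_iUnion.1 hB
      rw [Set.inter_comm]
      exact hFX δ B hB α
    · obtain ⟨δ, hA⟩ := Set.mem_iUnion.1 hA
      exact hFX δ A hA β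
    · obtain ⟨δ, hA⟩ := Set.mem_iUnion.1 hA
      obtain ⟨δ', hB⟩ := Set.mem_iUnion.1 hB
      rcases lt_trichotomy δ.1 δ'.1 with h | h | h
      · exact hFF δ δ' h A hA B hB
      · obtain rfl := Subtype.ext h
        exact hFad δ A hA B hB hAB
      · rw [Set.inter_comm]
        exact hFF δ' δ h B hB A hA
  · intro C hC
    have hne : {δ : WithTop c.ord.ToType |
        #(↥(C ∩ {x | (p x : WithTop c.ord.ToType) < δ})) = μ}.Nonempty := by
      refine ⟨⊤, ?_⟩
      have : C ∩ {x | (p x : WithTop c.ord.ToType) < ⊤} = C :=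
        Set.inter_eq_left.2 fun x _ => WithTop.coe_lt_top _
      rw [Set.mem_ofPred_eq, this, hC]
    -- the least cut below which `C` has size `μ`
    obtain ⟨δ, hδ, hmin⟩ : ∃ δ : WithTop c.ord.ToType,
        #(↥(C ∩ {x | (p x : WithTop c.ord.ToType) < δ})) = μ ∧
        ∀ α < δ, #(↥(C ∩ {x | (p x : WithTop c.ord.ToType) < α})) ≠ μ :=
      ⟨wellFounded_lt.min _ hne, wellFounded_lt.min_mem _ hne,
        fun α hα h => wellFounded_lt.not_lt_min {δ : WithTop c.ord.ToType |
          #(↥(C ∩ {x | (p x : WithTop c.ord.ToType) < δ})) = μ} h hα⟩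
    have hle : ∀ T : Set μ.out, #T ≤ μ := fun T => (mk_set_le T).trans hΩ.le
    by_cases hα : ∃ α : c.ord.ToType, (α : WithTop c.ord.ToType) < δ ∧
        #(↥(C ∩ {x | p x ≤ α})) = μ
    · obtain ⟨α, hαδ, hαC⟩ := hα
      refine ⟨X α, Or.inl ⟨α, rfl⟩, le_antisymm (hle _) (not_lt.1 fun hlt => ?_)⟩
      refine (mk_lt_of_subset_union hμ (T := X α ∩ C)
        (U := C ∩ {x | (p x : WithTop c.ord.ToType) < α}) ?_ hlt
        (lt_of_le_of_ne (hle _) (hmin _ hαδ))).ne hαC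
      rintro x ⟨hxC, hx⟩
      rcases lt_or_eq_of_le (show p x ≤ α from hx) with h | h
      · exact Or.inr ⟨hxC, WithTop.coe_lt_coe.2 h⟩
      · exact Or.inl ⟨h, hxC⟩
    · have hsm : ∀ α : c.ord.ToType, (α : WithTop c.ord.ToType) < δ →
          #(↥(C ∩ {x | p x ≤ α})) < μ := fun α hαδ =>
        lt_of_le_of_ne (hle _) fun h => hα ⟨α, hαδ, h⟩
      have hlad := exists_ladder hμ hsing p δ C hδ hsm
      rcases hFmax ⟨δ, hlad⟩ _ Set.inter_subset_right hδ with ⟨α, hαδ, hαC⟩ | ⟨A, hA, hAC⟩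
      · exfalso
        refine ((mk_le_mk_of_subset ?_).trans_lt (hsm α hαδ)).ne hαC
        rintro x ⟨⟨hxC, -⟩, hx⟩
        exact ⟨hxC, hx⟩
      · refine ⟨A, Or.inr (Set.mem_iUnion.2 ⟨_, hA⟩), le_antisymm (hle _)
          (hAC.symm.le.trans (mk_le_mk_of_subset ?_))⟩
        rintro x ⟨hxA, hxC, -⟩
        exact ⟨hxA, hxC⟩
  · have hXc : #(Set.range X) = c := by rw [mk_range_eq _ hXi, mk_ord_toType]
    have hWc : #(WithTop c.ord.ToType) ≤ c := by
      have : #(WithTop c.ord.ToType) = #(Option c.ord.ToType) := rfl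
      rw [this, mk_option, mk_ord_toType, add_one_eq hc]
    have hcard : #(↥(Set.range X ∪ ⋃ δ, F δ)) = c := by
      refine le_antisymm ?_ (hXc.symm.le.trans (mk_le_mk_of_subset Set.subset_union_left))
      refine (mk_union_le _ _).trans ((add_le_add hXc.le ?_).trans (add_eq_self hc).le)
      refine (mk_iUnion_le F).trans ?_
      refine (mul_le_mul' ((mk_subtype_le _).trans hWc)
        (ciSup_le' fun δ => (hFa δ).trans hac)).trans (mul_eq_self hc).le
    exact ⟨hκc.trans hcard.symm.le, hcard⟩
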